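/- arXiv:1112.2334 — 5 statements merged into one kernel-verified Lean document; each statement's English description precedes it below -/
import Mathlib

section
/- Let p, q ≥ 2 and e ≥ 0 be integers, and let Q = {(x, y) ∈ ℝ^p × ℝ^q : ‖x‖² = ‖y‖²}. Then no open neighborhood of the point ((0, 0), 0) in Q × ℝ^e is homeomorphic to an open subset of ℝ^{p+q−1+e}; that is, the origin is a topological singularity of Q × ℝ^e. -/
open Set Metric MeasureTheory

lemma aux_interp {E : Type*} [NormedAddCommGroup E] [NormedSpace ℝ E] [FiniteDimensional ℝ E]
    (v : ℕ → ℝ) (hv : Function.Injective v) (A : E →L[ℝ] E) (t : ℝ) :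
    ((1 : E →L[ℝ] E) + t • A).det = ∑ i ∈ Finset.range (Module.finrank ℝ E + 1),
      ((1 : E →L[ℝ] E) + v i • A).det *
        (Lagrange.basis (Finset.range (Module.finrank ℝ E + 1)) v i).eval t := by
  classical
  set b := Module.finBasis ℝ E
  set M := LinearMap.toMatrix b b (A : E →ₗ[ℝ] E)
  set P : Polynomial ℝ := Matrix.det ((Polynomial.X : Polynomial ℝ) • M.map Polynomial.C +
    (1 : Matrix _ _ ℝ).map Polynomial.C) with hPdef
  have hP : ∀ s : ℝ, ((1 : E →L[ℝ] E) + s • A).det = P.eval s := by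
    intro s
    have h1 : ((1 : E →L[ℝ] E) + s • A).det = (1 + s • M).det := by
      rw [ContinuousLinearMap.det, ← LinearMap.det_toMatrix b]
      congr 1
      rw [ContinuousLinearMap.toLinearMap_add, ContinuousLinearMap.toLinearMap_smul, map_add, map_smul]
      congr 1
      exact LinearMap.toMatrix_one b
    rw [h1, ← Polynomial.coe_evalRingHom, hPdef, RingHom.map_det]
    congr 1
    ext i j
    by_cases hij : i = j <;> simp [hij, add_comm] <;> ring
  have hdeg : P.degree < (Finset.range (Module.finrank ℝ E + 1)).card := by
    rw [Finset.card_range]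
    refine (Polynomial.degree_le_natDegree).trans_lt ?_
    have := Polynomial.natDegree_det_X_add_C_le M 1
    rw [Fintype.card_fin] at this
    exact_mod_cast Nat.lt_succ_of_le this
  have h2 := Lagrange.eq_interpolate (s := Finset.range (Module.finrank ℝ E + 1)) hv.injOn hdeg
  simp only [hP]
  conv_lhs => rw [h2]
  rw [Lagrange.interpolate_apply, Polynomial.eval_finsetSum]
  simp

lemma aux_small {E : Type*} [NormedAddCommGroup E] [NormedSpace ℝ E] [FiniteDimensional ℝ E]
    [MeasurableSpace E] [BorelSpace E] (μ : Measure E) [μ.IsAddHaarMeasure]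
    (v : E → E) (hv : ContDiff ℝ 1 v) (hv0 : ∀ x, ‖x‖ = 1 → v x = 0)
    (hH : ∀ x, ‖v x + x‖ = 1) :
    ∃ t0 : ℝ, 0 < t0 ∧ ∀ t, 0 < t → t < t0 →
      ∫ x in ball (0 : E) 1, ((1 : E →L[ℝ] E) + t • fderiv ℝ v x).det ∂μ = μ.real (ball 0 1) := by
  classical
  have hdc : Continuous (fderiv ℝ v) := hv.continuous_fderiv one_ne_zero
  obtain ⟨K0, hK0⟩ := (isCompact_closedBall (0 : E) 1).exists_bound_of_continuousOn
    hdc.continuousOn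
  set K : NNReal := ⟨max K0 1, by positivity⟩ with hK
  have hK1 : (0 : ℝ) < K := lt_of_lt_of_le one_pos (le_max_right K0 1)
  have hbd : ∀ x ∈ closedBall (0 : E) 1, ‖fderiv ℝ v x‖ ≤ K := fun x hx =>
    (hK0 x hx).trans (le_max_left K0 1)
  have hLip : LipschitzOnWith K v (closedBall 0 1) :=
    (convex_closedBall (0 : E) 1).lipschitzOnWith_of_nnnorm_fderiv_le (𝕜 := ℝ)
      (fun x _ => (hv.differentiable one_ne_zero) x) (fun x hx => hbd x hx)
  -- the extended field
  let u : E → E := fun x => if x ∈ ball (0 : E) 1 then v x else 0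
  have key : ∀ x y : E, x ∈ ball (0 : E) 1 → y ∉ ball (0 : E) 1 → ‖v x‖ ≤ K * ‖x - y‖ := by
    intro x y hx hy
    have hc : ContinuousOn (fun s : ℝ => ‖x + s • (y - x)‖) (Icc 0 1) := by fun_prop
    have := intermediate_value_Icc (zero_le_one) hc
    have h1 : (1 : ℝ) ∈ Icc (‖x + (0 : ℝ) • (y - x)‖) (‖x + (1 : ℝ) • (y - x)‖) := by
      simp at hx hy
      simp [hx.le, hy]
    obtain ⟨s, ⟨hs0, hs1⟩, hs⟩ := this h1
    simp only at hs
    have h2 := hLip.norm_sub_le (x := x) (y := x + s • (y - x)) (ball_subset_closedBall hx)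
      (by simp [hs])
    rw [hv0 _ hs, sub_zero] at h2
    refine h2.trans ?_
    gcongr
    have : x - (x + s • (y - x)) = s • (x - y) := by module
    rw [this, norm_smul, Real.norm_of_nonneg hs0]
    exact mul_le_of_le_one_left (norm_nonneg _) hs1
  have huL : ∀ x y, ‖u x - u y‖ ≤ K * ‖x - y‖ := by
    intro x y
    by_cases hx : x ∈ ball (0 : E) 1 <;> by_cases hy : y ∈ ball (0 : E) 1
    · simp only [u, if_pos hx, if_pos hy]
      exact hLip.norm_sub_le (ball_subset_closedBall hx) (ball_subset_closedBall hy)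
    · simp only [u, if_pos hx, if_neg hy, sub_zero]
      exact key x y hx hy
    · simp only [u, if_neg hx, if_pos hy, zero_sub, norm_neg]
      rw [norm_sub_rev]
      exact key y x hy hx
    · simp only [u, if_neg hx, if_neg hy, sub_zero, norm_zero]; positivity
  -- positivity of the determinant near one
  obtain ⟨d, hd, hdet⟩ : ∃ d > 0, ∀ B : E →L[ℝ] E, ‖B - 1‖ < d → 0 < B.det := by
    have h1 : ∀ᶠ B in nhds (1 : E →L[ℝ] E), 0 < B.det := by
      refine (ContinuousLinearMap.continuous_det.tendsto (1 : E →L[ℝ] E)).eventually_const_lt ?_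
      have : (1 : E →L[ℝ] E).det = 1 := LinearMap.det_id
      rw [this]; exact one_pos
    obtain ⟨d, hd, h⟩ := Metric.eventually_nhds_iff.1 h1
    exact ⟨d, hd, fun B hB => h (by rwa [dist_eq_norm])⟩
  refine ⟨min 1 (min (1 / K) (d / K)), by positivity, fun t ht htt => ?_⟩
  obtain ⟨ht1, htt⟩ := lt_min_iff.1 htt
  obtain ⟨htK, htd⟩ := lt_min_iff.1 htt
  rw [lt_div_iff₀ hK1] at htK htd
  let f : E → E := fun x => x + t • v x
  have hinj : InjOn f (ball 0 1) := by
    intro x hx y hy hxy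
    simp only [f] at hxy
    have h1 : x - y = - (t • (v x - v y)) := by
      rw [smul_sub, neg_sub, sub_eq_sub_iff_add_eq_add, hxy, add_comm]
    have h2 : ‖x - y‖ ≤ t * (K * ‖x - y‖) := by
      conv_lhs => rw [h1]
      rw [norm_neg, norm_smul, Real.norm_of_nonneg ht.le]
      gcongr
      exact hLip.norm_sub_le (ball_subset_closedBall hx) (ball_subset_closedBall hy)
    by_contra hne
    have h3 : 0 < ‖x - y‖ := norm_pos_iff.2 (sub_ne_zero.2 hne)
    nlinarith
  have himg : f '' ball 0 1 = ball 0 1 := by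
    apply Subset.antisymm
    · rintro _ ⟨x, hx, rfl⟩
      simp only [mem_ball_zero_iff] at hx ⊢
      have : f x = (1 - t) • x + t • (v x + x) := by simp only [f]; module
      rw [this]
      calc _ ≤ ‖(1 - t) • x‖ + ‖t • (v x + x)‖ := norm_add_le _ _
        _ = (1 - t) * ‖x‖ + t := by
          rw [norm_smul, norm_smul, hH, Real.norm_of_nonneg ht.le,
            Real.norm_of_nonneg (by linarith), mul_one]
        _ < 1 := by nlinarith
    · intro y hy
      have hcon : ContractingWith (t.toNNReal * K) (fun x => y - t • u x) := by
        refine ⟨by rw [← NNReal.coe_lt_coe, NNReal.coe_mul, Real.coe_toNNReal _ ht.le]; exact htK, ?_⟩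
        refine LipschitzWith.of_dist_le_mul fun a b => ?_
        rw [dist_eq_norm, dist_eq_norm]
        have : y - t • u a - (y - t • u b) = - (t • (u a - u b)) := by module
        rw [this, norm_neg, norm_smul, Real.norm_of_nonneg ht.le]
        have := huL a b
        rw [NNReal.coe_mul, Real.coe_toNNReal _ ht.le, mul_assoc]
        gcongr
      have hfix : y - t • u (hcon.fixedPoint) = hcon.fixedPoint := hcon.fixedPoint_isFixedPt
      set x := hcon.fixedPoint
      have hxy : y = x + t • u x := by rw [← sub_eq_iff_eq_add]; exact hfix
      by_cases hx : x ∈ ball (0 : E) 1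
      · refine ⟨x, hx, ?_⟩
        simp only [u, if_pos hx] at hxy
        exact hxy.symm
      · simp only [u, if_neg hx, smul_zero, add_zero] at hxy
        exact absurd (hxy ▸ hy) hx
  have hder : ∀ x ∈ ball (0 : E) 1,
      HasFDerivWithinAt f ((1 : E →L[ℝ] E) + t • fderiv ℝ v x) (ball 0 1) x := by
    intro x _
    exact ((hasFDerivAt_id x).add
      (((hv.differentiable one_ne_zero) x).hasFDerivAt.const_smul t)).hasFDerivWithinAt
  have := integral_image_eq_integral_abs_det_fderiv_smul μ measurableSet_ball hder hinj
    (fun _ => (1 : ℝ))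
  rw [himg] at this
  simp only [integral_const, smul_eq_mul, mul_one] at this
  rw [measureReal_restrict_apply_univ] at this
  rw [this]
  refine setIntegral_congr_fun measurableSet_ball fun x hx => ?_
  refine (abs_of_pos (hdet _ ?_)).symm
  rw [add_sub_cancel_left, norm_smul, Real.norm_of_nonneg ht.le]
  refine lt_of_le_of_lt ?_ htd
  gcongr
  exact hbd x (ball_subset_closedBall hx)

lemma aux_noretract {E : Type*} [NormedAddCommGroup E] [InnerProductSpace ℝ E]
    [FiniteDimensional ℝ E] (H : E → E) (hH : ContDiff ℝ 1 H) (h1 : ∀ x, ‖H x‖ = 1)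
    (h2 : ∀ x, ‖x‖ = 1 → H x = x) : False := by
  let _ : MeasurableSpace E := borel E
  have _ : BorelSpace E := ⟨rfl⟩
  let v : E → E := fun x => H x - x
  have hv : ContDiff ℝ 1 v := hH.sub contDiff_id
  have hdc : Continuous (fderiv ℝ v) := hv.continuous_fderiv one_ne_zero
  obtain ⟨t0, ht0, hint⟩ := aux_small (volume : Measure E) v hv
    (fun x hx => by simp [v, h2 x hx]) (fun x => by simp [v, h1])
  let w : ℕ → ℝ := fun n => t0 / (n + 2)
  have hw : Function.Injective w := by
    intro a b hab
    simp only [w] at hab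
    have ha : (0 : ℝ) < a + 2 := by positivity
    have hb : (0 : ℝ) < b + 2 := by positivity
    rw [div_eq_div_iff ha.ne' hb.ne'] at hab
    have := mul_left_cancel₀ ht0.ne' hab
    have : (b : ℝ) = a := by linarith
    exact_mod_cast this.symm
  have hwr : ∀ n, volume.real (ball (0 : E) 1) =
      ∫ x in ball (0 : E) 1, ((1 : E →L[ℝ] E) + w n • fderiv ℝ v x).det := by
    intro n
    have hb : (0 : ℝ) < n + 2 := by positivity
    refine (hint _ (by positivity) ?_).symm
    simp only [w]
    rw [div_lt_iff₀ hb]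
    nlinarith [(Nat.cast_nonneg n : (0 : ℝ) ≤ n)]
  set S := Finset.range (Module.finrank ℝ E + 1) with hS
  have hzero : ∀ x, ((1 : E →L[ℝ] E) + (1 : ℝ) • fderiv ℝ v x).det = 0 := by
    intro x
    have e1 : (1 : E →L[ℝ] E) + (1 : ℝ) • fderiv ℝ v x = fderiv ℝ H x := by
      have : fderiv ℝ v x = fderiv ℝ H x - 1 := by
        have := (((hH.differentiable one_ne_zero) x).hasFDerivAt.sub (hasFDerivAt_id x)).fderiv
        exact this
      rw [this]; simp
    rw [e1]
    by_contra hne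
    have hu : IsUnit (fderiv ℝ H x : E →ₗ[ℝ] E) := by
      rw [LinearMap.isUnit_iff_isUnit_det]
      exact isUnit_iff_ne_zero.2 hne
    rw [LinearMap.isUnit_iff_range_eq_top] at hu
    obtain ⟨z, hz⟩ := LinearMap.range_eq_top.1 hu (H x)
    have hd : HasFDerivAt H (fderiv ℝ H x) x := ((hH.differentiable one_ne_zero) x).hasFDerivAt
    have hi := hd.inner ℝ hd
    have hconst : (fun y => inner ℝ (H y) (H y)) = fun _ => (1 : ℝ) := by
      funext y; rw [real_inner_self_eq_norm_sq, h1]; norm_num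
    rw [hconst] at hi
    have := congrArg (fun L : E →L[ℝ] ℝ => L z) (hi.unique (hasFDerivAt_const _ _))
    have hz' : fderiv ℝ H x z = H x := hz
    simp [hz', h1] at this
  have hintg : ∀ n, IntegrableOn (fun x => ((1 : E →L[ℝ] E) + w n • fderiv ℝ v x).det)
      (ball (0 : E) 1) := by
    intro n
    have hc : Continuous (fun x => ((1 : E →L[ℝ] E) + w n • fderiv ℝ v x).det) :=
      ContinuousLinearMap.continuous_det.comp (by fun_prop)
    exact (hc.continuousOn.integrableOn_compact (isCompact_closedBall 0 1)).mono_set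
      ball_subset_closedBall
  have hsum : ∑ i ∈ S, (Lagrange.basis S w i).eval 1 = 1 := by
    rw [← Polynomial.eval_finsetSum, Lagrange.sum_basis hw.injOn (by simp [hS])]
    simp
  have hfin : (0 : ℝ) = volume.real (ball (0 : E) 1) := by
    calc (0 : ℝ) = ∫ x in ball (0 : E) 1, ((1 : E →L[ℝ] E) + (1 : ℝ) • fderiv ℝ v x).det := by
          simp only [hzero]; simp
      _ = ∫ x in ball (0 : E) 1, ∑ i ∈ S, ((1 : E →L[ℝ] E) + w i • fderiv ℝ v x).det *
            (Lagrange.basis S w i).eval 1 := by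
          congr 1; funext x; exact aux_interp w hw _ 1
      _ = ∑ i ∈ S, volume.real (ball (0 : E) 1) * (Lagrange.basis S w i).eval 1 := by
          rw [integral_finsetSum _ (fun i _ => (hintg i).mul_const _)]
          refine Finset.sum_congr rfl fun i _ => ?_
          rw [integral_mul_const, ← hwr]
      _ = _ := by rw [← Finset.mul_sum, hsum, mul_one]
  have hpos : 0 < volume.real (ball (0 : E) 1) := by
    rw [measureReal_def]
    exact ENNReal.toReal_pos (measure_ball_pos _ _ one_pos).ne' measure_ball_lt_top.ne
  exact hpos.ne hfin

lemma aux_zero {E : Type*} [NormedAddCommGroup E] [InnerProductSpace ℝ E]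
    [FiniteDimensional ℝ E] (g : E → E) (hg : Continuous g)
    (hgx : ∀ x, ‖x‖ ≤ 1 → ‖g x - x‖ ≤ 1 / 4) : ∃ x, ‖x‖ ≤ 1 ∧ g x = 0 := by
  by_contra hno
  push Not at hno
  obtain ⟨x0, hx0, hmin⟩ := (isCompact_closedBall (0 : E) 1).exists_isMinOn
    ⟨0, by simp⟩ (hg.norm.continuousOn)
  set c := ‖g x0‖ with hc
  have hc0 : 0 < c := norm_pos_iff.2 (hno x0 (by simpa using hx0))
  obtain ⟨k, hk, hkg, -⟩ := hg.exists_contDiff_approx 1 (ε := fun _ => min c (1 / 4))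
    continuous_const (fun _ => by positivity)
  have hk0 : ∀ x, ‖x‖ ≤ 1 → k x ≠ 0 := by
    intro x hx h0
    have h1 := (hkg x).trans_le (min_le_left _ _)
    rw [h0, dist_zero_left] at h1
    exact absurd (hmin (by simpa using hx : x ∈ closedBall (0 : E) 1)) (not_le.2 h1)
  have hkx : ∀ x, ‖x‖ ≤ 1 → ‖k x - x‖ < 1 / 2 := by
    intro x hx
    have h1 := (hkg x).trans_le (min_le_right _ _)
    rw [dist_eq_norm] at h1
    have h2 := hgx x hx
    have h3 := norm_sub_le_norm_sub_add_norm_sub (k x) (g x) x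
    linarith
  let χ : ContDiffBump (0 : E) := ⟨3 / 4, 1, by norm_num, by norm_num⟩
  let G : E → E := fun x => x + χ x • (k x - x)
  have hG : ContDiff ℝ 1 G :=
    contDiff_id.add (χ.contDiff.smul ((hk.of_le (by norm_num)).sub contDiff_id))
  have hGout : ∀ x, 1 ≤ ‖x‖ → G x = x := by
    intro x hx
    simp only [G]
    rw [χ.zero_of_le_dist (by simpa using hx)]; simp
  have hG0 : ∀ x, G x ≠ 0 := by
    intro x h0
    rcases le_or_gt 1 ‖x‖ with h | h
    · rw [hGout x h] at h0
      rw [h0, norm_zero] at h; linarith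
    · rcases le_or_gt ‖x‖ (3 / 4) with h' | h'
      · have : χ x = 1 := χ.one_of_mem_closedBall (by simpa using h')
        simp only [G, this, one_smul, add_sub_cancel] at h0
        exact hk0 x h.le h0
      · have h3 : x = - (χ x • (k x - x)) := eq_neg_of_add_eq_zero_left h0
        have h4 : ‖x‖ ≤ 1 / 2 := by
          conv_lhs => rw [h3]
          rw [norm_neg, norm_smul, Real.norm_of_nonneg χ.nonneg]
          have := hkx x h.le
          have h5 : χ x ≤ 1 := χ.le_one
          have h6 : 0 ≤ χ x := χ.nonneg
          nlinarith [norm_nonneg (k x - x)]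
        linarith
  refine aux_noretract (fun x => ‖G x‖⁻¹ • G x) ((hG.norm ℝ hG0).inv
    (fun x => norm_ne_zero_iff.2 (hG0 x)) |>.smul hG) (fun x => ?_) (fun x hx => ?_)
  · rw [norm_smul, norm_inv, norm_norm, inv_mul_cancel₀ (norm_ne_zero_iff.2 (hG0 x))]
  · simp only [hGout x hx.ge, hx]; simp

lemma aux_approx {E F : Type*} [NormedAddCommGroup E] [NormedSpace ℝ E]
    [FiniteDimensional ℝ E] [NormedAddCommGroup F] [NormedSpace ℝ F] [FiniteDimensional ℝ F]
    (hEF : Module.finrank ℝ E < Module.finrank ℝ F) (f : E → F) (hf : Continuous f) (w0 : F)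
    (δ : ℝ) (hδ : 0 < δ) :
    ∃ h : E → F, Continuous h ∧ (∀ x, dist (h x) (f x) < δ) ∧ ∀ x, h x ≠ w0 := by
  obtain ⟨k, hk, hkf, -⟩ := hf.exists_contDiff_approx 1 (ε := fun _ => δ / 2)
    continuous_const (fun _ => by positivity)
  have hd := ContDiff.dense_compl_range_of_finrank_lt_finrank (hk.of_le (by norm_num)) hEF
  obtain ⟨z, hz, hzd⟩ := hd.exists_dist_lt w0 (half_pos hδ)
  refine ⟨fun x => k x + (w0 - z), hk.continuous.add continuous_const, fun x => ?_, fun x hx => ?_⟩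
  · have h1 : dist (k x + (w0 - z)) (k x) < δ / 2 := by
      rw [dist_eq_norm, add_sub_cancel_left, ← dist_eq_norm]; exact hzd
    linarith [dist_triangle (k x + (w0 - z)) (k x) (f x), hkf x]
  · apply hz
    refine ⟨x, ?_⟩
    have : k x + (w0 - z) - w0 = 0 := sub_eq_zero.2 hx
    rw [← sub_eq_zero, ← this]; abel

lemma aux_main {E F X : Type*} [NormedAddCommGroup E] [InnerProductSpace ℝ E]
    [FiniteDimensional ℝ E] [NormedAddCommGroup F] [NormedSpace ℝ F] [FiniteDimensional ℝ F]
    [TopologicalSpace X]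
    (hEF : Module.finrank ℝ E < Module.finrank ℝ F) (i : E → X) (r : X → E)
    (hi : Continuous i) (hr : Continuous r) (hri : ∀ x, r (i x) = x) (x0 : X)
    (hi0 : i 0 = x0) (hr0 : ∀ x, r x = 0 → x = x0) (U : Set X) (hU : IsOpen U) (hx0 : x0 ∈ U)
    (W : Set F) (hW : IsOpen W) (Φ : U ≃ₜ W) : False := by
  classical
  have hnb : i ⁻¹' U ∈ nhds (0 : E) := (hU.preimage hi).mem_nhds (by simpa [hi0] using hx0)
  obtain ⟨ε', hε', hball⟩ := Metric.mem_nhds_iff.1 hnb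
  obtain ⟨ε, hε, hεε⟩ := exists_between hε'
  let ρ : E → E := fun x => (max 1 ‖x‖)⁻¹ • x
  have hρc : Continuous ρ := by
    refine Continuous.smul (Continuous.inv₀ (by fun_prop) fun x => ?_) continuous_id
    exact (lt_of_lt_of_le one_pos (le_max_left 1 ‖x‖)).ne'
  have hρ1 : ∀ x, ‖ρ x‖ ≤ 1 := by
    intro x
    have h0 : 0 < max 1 ‖x‖ := lt_of_lt_of_le one_pos (le_max_left 1 ‖x‖)
    simp only [ρ]
    rw [norm_smul, norm_inv, Real.norm_of_nonneg h0.le, inv_mul_le_iff₀ h0, mul_one]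
    exact le_max_right _ _
  have hρid : ∀ x, ‖x‖ ≤ 1 → ρ x = x := by
    intro x hx
    simp [ρ, max_eq_left hx]
  have hmem : ∀ x, i (ε • ρ x) ∈ U := by
    intro x
    apply hball
    rw [mem_ball_zero_iff, norm_smul, Real.norm_of_nonneg hε.le]
    nlinarith [hρ1 x]
  let f : E → F := fun x => (Φ ⟨i (ε • ρ x), hmem x⟩ : F)
  have hf : Continuous f := by
    refine continuous_subtype_val.comp (Φ.continuous.comp ?_)
    exact Continuous.subtype_mk (hi.comp (hρc.const_smul ε)) _
  have hfρ : ∀ x, f (ρ x) = f x := by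
    intro x
    simp only [f, hρid _ (hρ1 x)]
  let K : Set F := f '' closedBall 0 1
  have hK : IsCompact K := (isCompact_closedBall 0 1).image hf
  have hfK : ∀ x, f x ∈ K := fun x => ⟨ρ x, by simpa using hρ1 x, hfρ x⟩
  have hfW : ∀ x, f x ∈ W := fun x => (Φ ⟨i (ε • ρ x), hmem x⟩).2
  have hKW : K ⊆ W := by rintro _ ⟨x, -, rfl⟩; exact hfW x
  let k : F → E := fun w => if hw : w ∈ W then ε⁻¹ • r (Φ.symm ⟨w, hw⟩ : X) else 0
  have hkc : ContinuousOn k W := by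
    rw [continuousOn_iff_continuous_domRestrict]
    have : W.domRestrict k = fun w => ε⁻¹ • r (Φ.symm w : X) := by
      funext w; simp [k]
    rw [this]
    exact (hr.comp (continuous_subtype_val.comp Φ.symm.continuous)).const_smul _
  have hkf : ∀ x, k (f x) = ρ x := by
    intro x
    simp only [k, dif_pos (hfW x)]
    simp only [f, Subtype.coe_eta, Homeomorph.symm_apply_apply, hri]
    rw [smul_smul, inv_mul_cancel₀ hε.ne', one_smul]
  have hunif := hK.uniformContinuousAt_of_continuousAt k
    (fun a ha => hkc.continuousAt (hW.mem_nhds (hKW ha)))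
    (Metric.dist_mem_uniformity (by norm_num : (0 : ℝ) < 1 / 4))
  obtain ⟨δ1, hδ1, hd1⟩ := Metric.mem_uniformity_dist.1 hunif
  obtain ⟨δ2, hδ2, hd2⟩ := hK.exists_thickening_subset_open hW hKW
  obtain ⟨h, hh, hhf, hh0⟩ := aux_approx hEF f hf (Φ ⟨x0, hx0⟩ : F) (min δ1 δ2) (by positivity)
  have hhW : ∀ x, h x ∈ W := fun x => hd2 (Metric.mem_thickening_iff.2
    ⟨f x, hfK x, (hhf x).trans_le (min_le_right _ _)⟩)
  obtain ⟨x, hx, hx0'⟩ := aux_zero (fun x => k (h x)) (hkc.comp_continuous hh hhW) (by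
    intro x hx
    have h1 := hd1 (a := f x) (b := h x) (by
      rw [dist_comm]; exact (hhf x).trans_le (min_le_left _ _)) (hfK x)
    have h2 : dist (k (f x)) (k (h x)) < 1 / 4 := h1
    rw [hkf, hρid x hx, dist_comm, dist_eq_norm] at h2
    exact h2.le)
  simp only [k, dif_pos (hhW x), smul_eq_zero, inv_eq_zero, hε.ne', false_or] at hx0'
  have h3 := hr0 _ hx0'
  apply hh0 x
  have h4 : Φ.symm ⟨h x, hhW x⟩ = ⟨x0, hx0⟩ := Subtype.ext h3
  rw [← h4, Homeomorph.apply_symm_apply]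

theorem stmt_13 (p q e : ℕ) (hp : 2 ≤ p) (hq : 2 ≤ q) :
    ¬ ∃ U : Set ({z : EuclideanSpace ℝ (Fin p) × EuclideanSpace ℝ (Fin q) //
          ‖z.1‖ ^ 2 = ‖z.2‖ ^ 2} × EuclideanSpace ℝ (Fin e)),
        IsOpen U ∧
        (⟨⟨0, by simp⟩, 0⟩ : {z : EuclideanSpace ℝ (Fin p) × EuclideanSpace ℝ (Fin q) //
          ‖z.1‖ ^ 2 = ‖z.2‖ ^ 2} × EuclideanSpace ℝ (Fin e)) ∈ U ∧
        ∃ W : Set (EuclideanSpace ℝ (Fin (p + q - 1 + e))),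
          IsOpen W ∧ Nonempty (↥U ≃ₜ ↥W) := by
  rintro ⟨U, hU, h0, W, hW, ⟨Φ⟩⟩
  let y0 : EuclideanSpace ℝ (Fin q) := EuclideanSpace.single ⟨0, by omega⟩ 1
  have hy0 : ‖y0‖ = 1 := by simp [y0]
  have hmem : ∀ z : WithLp 2 (EuclideanSpace ℝ (Fin p) × EuclideanSpace ℝ (Fin e)),
      ‖((z.fst, ‖z.fst‖ • y0) : EuclideanSpace ℝ (Fin p) × EuclideanSpace ℝ (Fin q)).1‖ ^ 2 =
      ‖((z.fst, ‖z.fst‖ • y0) : EuclideanSpace ℝ (Fin p) × EuclideanSpace ℝ (Fin q)).2‖ ^ 2 := by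
    intro z; simp [norm_smul, hy0]
  refine aux_main (E := WithLp 2 (EuclideanSpace ℝ (Fin p) × EuclideanSpace ℝ (Fin e)))
    ?_ (fun z => ⟨⟨(z.fst, ‖z.fst‖ • y0), hmem z⟩, z.snd⟩)
    (fun s => WithLp.toLp 2 (s.1.1.1, s.2)) ?_ ?_ ?_ _ ?_ ?_ U hU h0 W hW Φ
  · rw [LinearEquiv.finrank_eq (WithLp.linearEquiv 2 ℝ _), Module.finrank_prod]
    simp only [finrank_euclideanSpace, Fintype.card_fin]
    omega
  · refine Continuous.prodMk (Continuous.subtype_mk ?_ _) ?_ <;> fun_prop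
  · fun_prop
  · intro x; rfl
  · ext <;> simp
  · rintro ⟨⟨⟨a, b⟩, hab⟩, c⟩ h
    have h' : (a, c) = (0, 0) := congrArg WithLp.ofLp h
    obtain ⟨rfl, rfl⟩ := Prod.mk.inj h'
    have hb : b = 0 := by
      simp at hab
      exact norm_eq_zero.1 (pow_eq_zero_iff two_ne_zero |>.1 hab.symm)
    subst hb
    rfl
end

section
/- Let ℓ₁, ℓ₂, ℓ₃, ℓ₄ > 0 satisfy ℓ₁ − ℓ₂ + ℓ₃ = ℓ₄, and suppose that (1, −1, 1) is the unique sign vector ε ∈ {−1, 1}³ with ε₁ℓ₁ + ε₂ℓ₂ + ε₃ℓ₃ = ℓ₄. Then the reduced configuration space of the planar closed 4-chain, Ĉ = {(u₁, u₂, u₃) ∈ (S¹)³ : ℓ₁u₁ + ℓ₂u₂ + ℓ₃u₃ = ℓ₄ • e₁} (where S¹ is the unit circle in ℝ² and e₁ = (1, 0)), is homeomorphic to a wedge of two circles, i.e. to {z ∈ ℂ : |z − 1| = 1 or |z + 1| = 1}. -/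
open Complex ComplexConjugate in
/-- The normalized configuration space. -/
def chainY (a b c d : ℝ) : Set (ℂ × ℂ × ℂ) :=
  {x | ‖x.1‖ = 1 ∧ ‖x.2.1‖ = 1 ∧ ‖x.2.2‖ = 1 ∧ (d : ℂ) + a * x.1 = b * x.2.1 + c * x.2.2}

theorem norm_one_iff_coord (z : ℂ) : ‖z‖ = 1 ↔ z.re ^ 2 + z.im ^ 2 = 1 := by
  rw [← sq_eq_sq₀ (norm_nonneg z) zero_le_one, ← Complex.normSq_eq_norm_sq, Complex.normSq_apply]
  constructor <;> intro h <;> nlinarith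

theorem chainY_compact (a b c d : ℝ) : IsCompact (chainY a b c d) := by
  apply Metric.isCompact_of_isClosed_isBounded
  · unfold chainY
    simp only [Set.ofPred_and]
    refine IsClosed.inter ?_ (IsClosed.inter ?_ (IsClosed.inter ?_ ?_)) <;>
      exact isClosed_eq (by fun_prop) (by fun_prop)
  · refine (Metric.isBounded_closedBall (x := (0 : ℂ × ℂ × ℂ)) (r := 1)).subset ?_
    rintro ⟨v, p, q⟩ ⟨h1, h2, h3, -⟩
    simp only at h1 h2 h3
    simp [Prod.norm_def, h1, h2, h3]

/-- The oriented area of the pair `p, q`. -/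
def crossT (x : ℂ × ℂ × ℂ) : ℝ := x.2.1.re * x.2.2.im - x.2.1.im * x.2.2.re

/-- The map to the figure eight. -/
noncomputable def chainF (x : ℂ × ℂ × ℂ) : ℂ := ((SignType.sign (crossT x) : ℝ) : ℂ) * (1 - x.1)

theorem chainY_coords {a b c d : ℝ} {v p q : ℂ} (h : (v, p, q) ∈ chainY a b c d) :
    v.re ^ 2 + v.im ^ 2 = 1 ∧ p.re ^ 2 + p.im ^ 2 = 1 ∧ q.re ^ 2 + q.im ^ 2 = 1 ∧
    d + a * v.re = b * p.re + c * q.re ∧ a * v.im = b * p.im + c * q.im := by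
  obtain ⟨h1, h2, h3, h4⟩ := h
  simp only at h1 h2 h3 h4
  refine ⟨(norm_one_iff_coord v).1 h1, (norm_one_iff_coord p).1 h2, (norm_one_iff_coord q).1 h3, ?_, ?_⟩
  · simpa using congrArg Complex.re h4
  · simpa using congrArg Complex.im h4

section
variable {a b c d : ℝ}

theorem unit_re_one {v : ℂ} (h : v.re ^ 2 + v.im ^ 2 = 1) (h' : 1 ≤ v.re) : v = 1 := by
  have h1 : v.im ^ 2 = 0 := by nlinarith [sq_nonneg v.im]
  have h2 : v.im = 0 := by simpa using h1
  have h3 : v.re = 1 := by nlinarith [sq_nonneg v.im]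
  apply Complex.ext <;> simp [h2, h3]

theorem normsq_rel {v p q : ℂ} (h : (v, p, q) ∈ chainY a b c d) :
    d ^ 2 + a ^ 2 + 2 * a * d * v.re =
      b ^ 2 + c ^ 2 + 2 * b * c * (p.re * q.re + p.im * q.im) := by
  obtain ⟨h1, h2, h3, h4, h5⟩ := chainY_coords h
  have e : (d + a * v.re) ^ 2 + (a * v.im) ^ 2 =
    (b * p.re + c * q.re) ^ 2 + (b * p.im + c * q.im) ^ 2 := by rw [h4, h5]
  linear_combination e - a ^ 2 * h1 + b ^ 2 * h2 + c ^ 2 * h3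

theorem cross_dot {v p q : ℂ} (h : (v, p, q) ∈ chainY a b c d) :
    (p.re * q.re + p.im * q.im) ^ 2 + crossT (v, p, q) ^ 2 = 1 := by
  obtain ⟨h1, h2, h3, h4, h5⟩ := chainY_coords h
  simp only [crossT]
  linear_combination (q.re ^ 2 + q.im ^ 2) * h2 + h3

theorem v_eq_one (ha : 0 < a) (hd : 0 < d)
    (hs : a + d = b + c) (hlt : (b - c) ^ 2 < (d - a) ^ 2)
    {v p q : ℂ} (h : (v, p, q) ∈ chainY a b c d) (ht : crossT (v, p, q) = 0) : v = 1 := by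
  have e1 := normsq_rel h
  have e2 := cross_dot h
  obtain ⟨h1, h2, h3, h4, h5⟩ := chainY_coords h
  rw [ht] at e2
  have hv : -1 ≤ v.re := by nlinarith [sq_nonneg v.im, sq_nonneg v.re]
  have had : 0 < a * d := mul_pos ha hd
  have : p.re * q.re + p.im * q.im = 1 ∨ p.re * q.re + p.im * q.im = -1 :=
    sq_eq_sq_iff_eq_or_eq_neg.1 (by linarith)
  rcases this with h | h
  · rw [h] at e1
    have e3 : a * d * (v.re - 1) = 0 := by
      linear_combination (1/2) * e1 - (1/2) * (a + d + b + c) * hs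
    have e4 : v.re - 1 = 0 := by
      rcases mul_eq_zero.1 e3 with h | h
      · exact absurd h had.ne'
      · exact h
    exact unit_re_one h1 (by linarith)
  · rw [h] at e1
    exfalso
    nlinarith

theorem pq_eq_one (hb : 0 < b) (hc : 0 < c) (hs : a + d = b + c)
    {p q : ℂ} (h : ((1 : ℂ), p, q) ∈ chainY a b c d) : p = 1 ∧ q = 1 := by
  obtain ⟨h1, h2, h3, h4, h5⟩ := chainY_coords h
  simp only [Complex.one_re, Complex.one_im] at h4 h5
  have hp : p.re ≤ 1 := by nlinarith [sq_nonneg p.im, sq_nonneg p.re]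
  have hq : q.re ≤ 1 := by nlinarith [sq_nonneg q.im, sq_nonneg q.re]
  constructor
  · exact unit_re_one h2 (by nlinarith)
  · exact unit_re_one h3 (by nlinarith)

theorem chainF_mem {x : ℂ × ℂ × ℂ} (hx : x ∈ chainY a b c d) :
    ‖chainF x - 1‖ = 1 ∨ ‖chainF x + 1‖ = 1 := by
  have h1 : ‖x.1‖ = 1 := hx.1
  unfold chainF
  rcases lt_trichotomy (crossT x) 0 with h | h | h
  · right; simp [sign_neg h, h1]
  · left; simp [h]
  · left; simp [sign_pos h, h1]

theorem chainF_cont (ha : 0 < a) (hd : 0 < d)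
    (hs : a + d = b + c) (hlt : (b - c) ^ 2 < (d - a) ^ 2) :
    Continuous (fun x : chainY a b c d => chainF x.1) := by
  have hT : Continuous (fun x : chainY a b c d => crossT x.1) := by
    unfold crossT; fun_prop
  rw [continuous_iff_continuousAt]
  intro x
  rcases lt_trichotomy (crossT x.1) 0 with h | h | h
  · have : (fun x : chainY a b c d => chainF x.1) =ᶠ[nhds x] fun x => -(1 - x.1.1) := by
      filter_upwards [hT.continuousAt.eventually (gt_mem_nhds h)] with y hy
      simp [chainF, sign_neg hy]
    exact ContinuousAt.congr (by fun_prop) this.symm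
  · have hv : x.1.1 = 1 := v_eq_one ha hd hs hlt x.2 h
    have h0 : chainF x.1 = 0 := by simp [chainF, h]
    rw [ContinuousAt, h0]
    apply squeeze_zero_norm (a := fun y : chainY a b c d => ‖1 - y.1.1‖)
    · intro y
      unfold chainF
      rcases lt_trichotomy (crossT y.1) 0 with h | h | h
      · simp [sign_neg h, norm_sub_rev]
      · simp [h]
      · simp [sign_pos h]
    · have : ContinuousAt (fun y : chainY a b c d => ‖1 - y.1.1‖) x := by fun_prop
      simpa [ContinuousAt, hv] using this
  · have : (fun x : chainY a b c d => chainF x.1) =ᶠ[nhds x] fun x => (1 - x.1.1) := by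
      filter_upwards [hT.continuousAt.eventually (lt_mem_nhds h)] with y hy
      simp [chainF, sign_pos hy]
    exact ContinuousAt.congr (by fun_prop) this.symm

/-- Same `v` and same sign of the area determine `p` and `q`. -/
theorem pq_unique (ha : 0 < a) (hb : 0 < b) (hc : 0 < c) (hd : 0 < d)
    (hlt : (b - c) ^ 2 < (d - a) ^ 2)
    {v p q p' q' : ℂ} (h : (v, p, q) ∈ chainY a b c d) (h' : (v, p', q') ∈ chainY a b c d)
    (ht : 0 < crossT (v, p, q) * crossT (v, p', q')) : p = p' ∧ q = q' := by
  have e1 := normsq_rel h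
  have e1' := normsq_rel h'
  have e2 := cross_dot h
  have e2' := cross_dot h'
  have hbc : 0 < b * c := mul_pos hb hc
  have hdot : p.re * q.re + p.im * q.im = p'.re * q'.re + p'.im * q'.im := by
    apply mul_left_cancel₀ hbc.ne'
    linarith
  have hcr : crossT (v, p, q) = crossT (v, p', q') := by
    rw [hdot] at e2
    have : crossT (v, p, q) ^ 2 = crossT (v, p', q') ^ 2 := by linarith
    rcases sq_eq_sq_iff_eq_or_eq_neg.1 this with h | h
    · exact h
    · rw [h] at ht
      nlinarith [sq_nonneg (crossT (v, p', q'))]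
  obtain ⟨h1, h2, h3, h4, h5⟩ := chainY_coords h
  obtain ⟨-, h2', h3', h4', h5'⟩ := chainY_coords h'
  simp only [crossT] at hcr
  have hDpos : 0 < d ^ 2 + a ^ 2 + 2 * a * d * v.re := by
    have hv : -1 ≤ v.re := by nlinarith [sq_nonneg v.im, sq_nonneg v.re]
    have had : 0 < a * d := mul_pos ha hd
    have := mul_nonneg had.le (by linarith : 0 ≤ v.re + 1)
    linarith [sq_nonneg (b - c)]
  set m : ℂ := (starRingEnd ℂ) p * q with hm
  have hpp : p * (starRingEnd ℂ) p = 1 := by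
    rw [Complex.mul_conj, Complex.normSq_apply]; norm_cast; linarith
  have hpp' : p' * (starRingEnd ℂ) p' = 1 := by
    rw [Complex.mul_conj, Complex.normSq_apply]; norm_cast; linarith
  have hm' : m = (starRingEnd ℂ) p' * q' := by
    apply Complex.ext
    · simp [hm]; linarith
    · simp [hm]; linarith
  have hq : q = p * m := by rw [hm, ← mul_assoc, hpp, one_mul]
  have hq' : q' = p' * m := by rw [hm', ← mul_assoc, hpp', one_mul]
  have H : (d : ℂ) + a * v = b * p + c * q := h.2.2.2
  have H' : (d : ℂ) + a * v = b * p' + c * q' := h'.2.2.2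
  have hne : (b : ℂ) + c * m ≠ 0 := by
    intro h0
    have hz : (d : ℂ) + a * v = 0 := by rw [H, hq]; linear_combination p * h0
    have r1 : d + a * v.re = 0 := by simpa using congrArg Complex.re hz
    have r2 : a * v.im = 0 := by
      have := congrArg Complex.im hz
      simp at this
      rcases this with h | h <;> simp [h]
    have : d ^ 2 + a ^ 2 + 2 * a * d * v.re = 0 := by
      linear_combination (d + a * v.re) * r1 + (a * v.im) * r2 - a ^ 2 * h1
    linarith
  have hp : p = p' := by
    apply mul_right_cancel₀ hne
    rw [hq] at H
    rw [hq'] at H'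
    linear_combination H' - H
  exact ⟨hp, by rw [hq, hq', hp]⟩

theorem cross_one : crossT ((1 : ℂ), (1 : ℂ), (1 : ℂ)) = 0 := by simp [crossT]

theorem chainF_inj (ha : 0 < a) (hb : 0 < b) (hc : 0 < c) (hd : 0 < d)
    (hs : a + d = b + c) (hlt : (b - c) ^ 2 < (d - a) ^ 2)
    {x y : ℂ × ℂ × ℂ} (hx : x ∈ chainY a b c d) (hy : y ∈ chainY a b c d)
    (h : chainF x = chainF y) : x = y := by
  obtain ⟨v, p, q⟩ := x
  obtain ⟨v', p', q'⟩ := y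
  have key : ∀ {v p q : ℂ}, (v, p, q) ∈ chainY a b c d → v = 1 → p = 1 ∧ q = 1 := by
    rintro v p q h rfl
    exact pq_eq_one hb hc hs h
  have hz : ∀ {v p q : ℂ}, (v, p, q) ∈ chainY a b c d → chainF (v, p, q) = 0 → v = 1 := by
    intro v p q h h0
    rcases mul_eq_zero.1 h0 with h1 | h1
    · apply v_eq_one ha hd hs hlt h
      rcases lt_trichotomy (crossT (v, p, q)) 0 with h | h | h
      · simp [sign_neg h] at h1
      · exact h
      · simp [sign_pos h] at h1
    · exact (sub_eq_zero.1 h1).symm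
  by_cases h0 : chainF (v, p, q) = 0
  · have hv := hz hx h0
    have hv' := hz hy (h ▸ h0)
    obtain ⟨rfl, rfl⟩ := key hx hv
    obtain ⟨rfl, rfl⟩ := key hy hv'
    rw [hv, hv']
  · have h0' : chainF (v', p', q') ≠ 0 := h ▸ h0
    have hv1 : v.re ≤ 1 := by
      obtain ⟨h1, -⟩ := chainY_coords hx
      nlinarith [sq_nonneg v.im, sq_nonneg v.re]
    have hv1' : v'.re ≤ 1 := by
      obtain ⟨h1, -⟩ := chainY_coords hy
      nlinarith [sq_nonneg v'.im, sq_nonneg v'.re]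
    have hopp : (1 - v) = -(1 - v') → False := by
      intro e
      have e1 : 1 - v.re = -(1 - v'.re) := by simpa using congrArg Complex.re e
      have : v = 1 := unit_re_one (chainY_coords hx).1 (by linarith)
      apply h0
      simp [chainF, this]
    rcases lt_trichotomy (crossT (v, p, q)) 0 with t | t | t
    · rcases lt_trichotomy (crossT (v', p', q')) 0 with t' | t' | t'
      · have hv : v = v' := by simpa [chainF, sign_neg t, sign_neg t'] using h
        subst hv
        obtain ⟨rfl, rfl⟩ := pq_unique ha hb hc hd hlt hx hy (mul_pos_of_neg_of_neg t t')
        rfl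
      · exact absurd (by simp [chainF, t']) h0'
      · exfalso
        simp only [chainF, sign_neg t, sign_pos t'] at h
        apply hopp
        simp at h
        linear_combination -h
    · exact absurd (by simp [chainF, t]) h0
    · rcases lt_trichotomy (crossT (v', p', q')) 0 with t' | t' | t'
      · exfalso
        simp only [chainF, sign_pos t, sign_neg t'] at h
        apply hopp
        simp at h
        linear_combination h
      · exact absurd (by simp [chainF, t']) h0'
      · have hv : v = v' := by simpa [chainF, sign_pos t, sign_pos t'] using h
        subst hv
        obtain ⟨rfl, rfl⟩ := pq_unique ha hb hc hd hlt hx hy (mul_pos t t')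
        rfl

theorem exists_pq (ha : 0 < a) (hb : 0 < b) (hc : 0 < c) (hd : 0 < d)
    (hs : a + d = b + c) (hlt : (b - c) ^ 2 < (d - a) ^ 2)
    {v : ℂ} (hv : ‖v‖ = 1) (hv1 : v ≠ 1) (s : ℝ) (hs1 : s ^ 2 = 1) :
    ∃ p q : ℂ, (v, p, q) ∈ chainY a b c d ∧ 0 < s * crossT (v, p, q) := by
  have hvc := (norm_one_iff_coord v).1 hv
  have hre : v.re < 1 := by
    by_contra hh
    exact hv1 (unit_re_one hvc (not_lt.1 hh))
  have hre' : -1 ≤ v.re := by nlinarith [sq_nonneg v.im, sq_nonneg v.re]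
  have had : 0 < a * d := mul_pos ha hd
  have hbc : 0 < b * c := mul_pos hb hc
  obtain ⟨k, hk⟩ : ∃ k : ℝ, d ^ 2 + a ^ 2 + 2 * a * d * v.re = b ^ 2 + c ^ 2 + 2 * b * c * k := by
    refine ⟨(d ^ 2 + a ^ 2 + 2 * a * d * v.re - b ^ 2 - c ^ 2) / (2 * b * c), ?_⟩
    field_simp
    ring
  have hk1 : k < 1 := by
    have e : b * c * (k - 1) = a * d * (v.re - 1) := by
      linear_combination -(1/2) * hk + (1/2) * (a + d + b + c) * hs
    by_contra hh
    nlinarith [mul_nonneg hbc.le (sub_nonneg.2 (not_lt.1 hh))]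
  have hk2 : -1 < k := by
    by_contra hh
    nlinarith [mul_nonneg hbc.le (sub_nonneg.2 (not_lt.1 hh)), mul_nonneg had.le (by linarith : 0 ≤ v.re + 1)]
  have hk3 : 0 < 1 - k ^ 2 := by nlinarith
  set r := Real.sqrt (1 - k ^ 2) with hr
  have hr0 : 0 < r := Real.sqrt_pos.2 hk3
  have hr2 : r ^ 2 = 1 - k ^ 2 := Real.sq_sqrt hk3.le
  set m : ℂ := ⟨k, s * r⟩ with hm
  have hmn : ‖m‖ = 1 := by
    rw [norm_one_iff_coord]
    simp only [hm]
    linear_combination r ^ 2 * hs1 + hr2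
  have hD : Complex.normSq ((d : ℂ) + a * v) = Complex.normSq ((b : ℂ) + c * m) := by
    simp [Complex.normSq_apply, hm]
    linear_combination hk + a ^ 2 * hvc - c ^ 2 * r ^ 2 * hs1 - c ^ 2 * hr2
  have hDpos : 0 < Complex.normSq ((d : ℂ) + a * v) := by
    simp [Complex.normSq_apply]
    nlinarith [sq_nonneg (b - c), mul_nonneg had.le (by linarith : 0 ≤ v.re + 1)]
  have hne : (b : ℂ) + c * m ≠ 0 := by
    intro h0
    rw [hD, h0] at hDpos
    simp at hDpos
  set p : ℂ := ((d : ℂ) + a * v) / ((b : ℂ) + c * m) with hp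
  have hpn : ‖p‖ = 1 := by
    have : ‖(d : ℂ) + a * v‖ = ‖(b : ℂ) + c * m‖ := by
      rw [Complex.normSq_eq_norm_sq, Complex.normSq_eq_norm_sq] at hD
      exact (sq_eq_sq₀ (norm_nonneg _) (norm_nonneg _)).1 hD
    rw [hp, norm_div, this, div_self (norm_ne_zero_iff.2 hne)]
  refine ⟨p, p * m, ⟨hv, hpn, by simp [hpn, hmn], ?_⟩, ?_⟩
  · have : (d : ℂ) + a * v = p * (b + c * m) := by rw [hp, div_mul_cancel₀ _ hne]
    simp only
    rw [this]; ring
  · have hpc := (norm_one_iff_coord p).1 hpn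
    have : s * crossT (v, p, p * m) = r := by
      simp only [crossT, Complex.mul_re, Complex.mul_im, hm]
      linear_combination s ^ 2 * r * hpc + r * hs1
    rw [this]; exact hr0

theorem one_mem_chainY (hs : a + d = b + c) : ((1 : ℂ), (1 : ℂ), (1 : ℂ)) ∈ chainY a b c d := by
  refine ⟨by simp, by simp, by simp, ?_⟩
  have : (a : ℂ) + d = b + c := by exact_mod_cast hs
  simp only
  linear_combination this

theorem chainF_surj (ha : 0 < a) (hb : 0 < b) (hc : 0 < c) (hd : 0 < d)
    (hs : a + d = b + c) (hlt : (b - c) ^ 2 < (d - a) ^ 2)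
    {z : ℂ} (hz : ‖z - 1‖ = 1 ∨ ‖z + 1‖ = 1) : ∃ x ∈ chainY a b c d, chainF x = z := by
  by_cases h0 : z = 0
  · exact ⟨_, one_mem_chainY hs, by simp [chainF, h0]⟩
  · rcases hz with hz | hz
    · obtain ⟨p, q, h, h'⟩ := exists_pq (v := 1 - z) ha hb hc hd hs hlt
        (by rw [norm_sub_rev]; exact hz) (by simpa using h0) 1 (by norm_num)
      refine ⟨_, h, ?_⟩
      rw [one_mul] at h'
      simp [chainF, sign_pos h']
    · obtain ⟨p, q, h, h'⟩ := exists_pq (v := 1 + z) ha hb hc hd hs hlt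
        (by rw [add_comm]; exact hz) (by simpa using h0) (-1) (by norm_num)
      refine ⟨_, h, ?_⟩
      have h'' : crossT (1 + z, p, q) < 0 := by linarith
      simp [chainF, sign_neg h'']

theorem chainY_homeo (ha : 0 < a) (hb : 0 < b) (hc : 0 < c) (hd : 0 < d)
    (hs : a + d = b + c) (hlt : (b - c) ^ 2 < (d - a) ^ 2) :
    Nonempty (chainY a b c d ≃ₜ {z : ℂ // ‖z - 1‖ = 1 ∨ ‖z + 1‖ = 1}) := by
  have : CompactSpace (chainY a b c d) := isCompact_iff_compactSpace.1 (chainY_compact a b c d)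
  let F : chainY a b c d → {z : ℂ // ‖z - 1‖ = 1 ∨ ‖z + 1‖ = 1} :=
    fun x => ⟨chainF x.1, chainF_mem x.2⟩
  have hF : Continuous F := (chainF_cont ha hd hs hlt).subtype_mk _
  have hbij : Function.Bijective F := by
    constructor
    · intro x y h
      exact Subtype.ext (chainF_inj ha hb hc hd hs hlt x.2 y.2 (congrArg Subtype.val h))
    · rintro ⟨z, hz⟩
      obtain ⟨x, hx, h⟩ := chainF_surj ha hb hc hd hs hlt hz
      exact ⟨⟨x, hx⟩, Subtype.ext h⟩
  exact ⟨Continuous.homeoOfEquivCompactToT2 (f := Equiv.ofBijective F hbij) hF⟩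

end

/-- The plane as the complex numbers. -/
noncomputable def planeE : ℂ ≃ₗᵢ[ℝ] EuclideanSpace ℝ (Fin 2) := Complex.orthonormalBasisOneI.repr

theorem planeE_one : planeE 1 = EuclideanSpace.single (0 : Fin 2) (1 : ℝ) := by
  have := Complex.orthonormalBasisOneI.repr_self 0
  simpa [planeE] using this

/-- Complex version of the configuration space. -/
def chainZ (l₁ l₂ l₃ l₄ : ℝ) : Set (ℂ × ℂ × ℂ) :=
  {x | ‖x.1‖ = 1 ∧ ‖x.2.1‖ = 1 ∧ ‖x.2.2‖ = 1 ∧ (l₁ : ℂ) * x.1 + l₂ * x.2.1 + l₃ * x.2.2 = l₄}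

theorem planeE_eqn (l₁ l₂ l₃ l₄ : ℝ) (x y z : ℂ) :
    l₁ • planeE x + l₂ • planeE y + l₃ • planeE z =
      l₄ • (EuclideanSpace.single (0 : Fin 2) (1 : ℝ)) ↔ (l₁ : ℂ) * x + l₂ * y + l₃ * z = l₄ := by
  rw [← planeE_one, ← map_smul, ← map_smul, ← map_smul, ← map_smul, ← map_add, ← map_add,
    planeE.injective.eq_iff]
  simp

noncomputable def configHomeo (l₁ l₂ l₃ l₄ : ℝ) :
    {u : Fin 3 → EuclideanSpace ℝ (Fin 2) //
          (∀ i, ‖u i‖ = 1) ∧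
          l₁ • u 0 + l₂ • u 1 + l₃ • u 2 =
            l₄ • (EuclideanSpace.single (0 : Fin 2) (1 : ℝ))} ≃ₜ chainZ l₁ l₂ l₃ l₄ where
  toFun u := ⟨(planeE.symm (u.1 0), planeE.symm (u.1 1), planeE.symm (u.1 2)), by
    refine ⟨by simp [u.2.1], by simp [u.2.1], by simp [u.2.1], ?_⟩
    have := u.2.2
    simp only
    rw [← planeE_eqn]
    simpa using this⟩
  invFun x := ⟨![planeE x.1.1, planeE x.1.2.1, planeE x.1.2.2], by
    refine ⟨?_, ?_⟩
    · intro i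
      have h := x.2
      fin_cases i
      · simpa using h.1
      · simpa using h.2.1
      · simpa using h.2.2.1
    · have := (planeE_eqn _ _ _ _ _ _ _).2 x.2.2.2.2
      simpa using this⟩
  left_inv u := by
    apply Subtype.ext
    funext i
    fin_cases i <;> simp
  right_inv x := by
    apply Subtype.ext
    simp
  continuous_toFun := by
    refine Continuous.subtype_mk ?_ _
    have h := planeE.symm.continuous
    exact (h.comp ((continuous_apply 0).comp continuous_subtype_val)).prodMk
      ((h.comp ((continuous_apply 1).comp continuous_subtype_val)).prodMk
        (h.comp ((continuous_apply 2).comp continuous_subtype_val)))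
  continuous_invFun := by
    refine Continuous.subtype_mk ?_ _
    have := planeE.continuous
    refine continuous_pi fun i => ?_
    fin_cases i
    · simp; fun_prop
    · simp; fun_prop
    · simp; fun_prop

def homeoA (l₁ l₂ l₃ l₄ : ℝ) : chainZ l₁ l₂ l₃ l₄ ≃ₜ chainY l₂ l₁ l₃ l₄ where
  toFun x := ⟨(-x.1.2.1, x.1.1, x.1.2.2), by
    obtain ⟨h1, h2, h3, h4⟩ := x.2
    refine ⟨by simpa using h2, h1, h3, ?_⟩
    simp only
    linear_combination -h4⟩
  invFun x := ⟨(x.1.2.1, -x.1.1, x.1.2.2), by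
    obtain ⟨h1, h2, h3, h4⟩ := x.2
    refine ⟨h2, by simpa using h1, h3, ?_⟩
    simp only
    linear_combination -h4⟩
  left_inv x := by apply Subtype.ext; simp
  right_inv x := by apply Subtype.ext; simp
  continuous_toFun := Continuous.subtype_mk (by fun_prop) _
  continuous_invFun := Continuous.subtype_mk (by fun_prop) _

theorem conj_mul_one {z : ℂ} (h : ‖z‖ = 1) : (starRingEnd ℂ) z * z = 1 := by
  rw [← Complex.normSq_eq_conj_mul_self, Complex.normSq_eq_norm_sq, h]; simp

def homeoB (l₁ l₂ l₃ l₄ : ℝ) : chainZ l₁ l₂ l₃ l₄ ≃ₜ chainY l₃ l₄ l₂ l₁ where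
  toFun x := ⟨((starRingEnd ℂ) x.1.1 * x.1.2.2, (starRingEnd ℂ) x.1.1,
      -((starRingEnd ℂ) x.1.1 * x.1.2.1)), by
    obtain ⟨h1, h2, h3, h4⟩ := x.2
    refine ⟨by simp [h1, h3], by simp [h1], by simp [h1, h2], ?_⟩
    have := conj_mul_one h1
    simp only
    linear_combination (starRingEnd ℂ) x.1.1 * h4 - l₁ * this⟩
  invFun x := ⟨((starRingEnd ℂ) x.1.2.1, -((starRingEnd ℂ) x.1.2.1 * x.1.2.2),
      (starRingEnd ℂ) x.1.2.1 * x.1.1), by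
    obtain ⟨h1, h2, h3, h4⟩ := x.2
    refine ⟨by simp [h2], by simp [h2, h3], by simp [h1, h2], ?_⟩
    have := conj_mul_one h2
    simp only
    linear_combination (starRingEnd ℂ) x.1.2.1 * h4 + l₄ * this⟩
  left_inv x := by
    apply Subtype.ext
    have := conj_mul_one x.2.1
    refine Prod.ext (by simp) (Prod.ext ?_ ?_)
    · simp only [Complex.conj_conj]; linear_combination x.1.2.1 * this
    · simp only [Complex.conj_conj]; linear_combination x.1.2.2 * this
  right_inv x := by
    apply Subtype.ext
    have := conj_mul_one x.2.2.1
    refine Prod.ext ?_ (Prod.ext (by simp) ?_)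
    · simp only [Complex.conj_conj]; linear_combination x.1.1 * this
    · simp only [Complex.conj_conj]; linear_combination x.1.2.2 * this
  continuous_toFun := by
    have := Complex.continuous_conj
    exact Continuous.subtype_mk (by fun_prop) _
  continuous_invFun := by
    have := Complex.continuous_conj
    exact Continuous.subtype_mk (by fun_prop) _

theorem stmt_14 (l₁ l₂ l₃ l₄ : ℝ)
    (h1 : 0 < l₁) (h2 : 0 < l₂) (h3 : 0 < l₃) (h4 : 0 < l₄)
    (hdeg : l₁ - l₂ + l₃ = l₄)
    (huniq : ∀ ε : Fin 3 → ℝ, (∀ i, ε i = 1 ∨ ε i = -1) →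
      ε 0 * l₁ + ε 1 * l₂ + ε 2 * l₃ = l₄ →
      ε 0 = 1 ∧ ε 1 = -1 ∧ ε 2 = 1) :
    Nonempty
      ({u : Fin 3 → EuclideanSpace ℝ (Fin 2) //
          (∀ i, ‖u i‖ = 1) ∧
          l₁ • u 0 + l₂ • u 1 + l₃ • u 2 =
            l₄ • (EuclideanSpace.single (0 : Fin 2) (1 : ℝ))} ≃ₜ
        {z : ℂ // ‖z - 1‖ = 1 ∨ ‖z + 1‖ = 1}) := by
  have n1 : l₂ - l₃ ≠ 0 := by
    intro h
    have := huniq ![1, 1, -1] (by intro i; fin_cases i <;> simp) (by simp; linarith)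
    have := this.2.1
    norm_num at this
  have n2 : l₂ - l₁ ≠ 0 := by
    intro h
    have := huniq ![-1, 1, 1] (by intro i; fin_cases i <;> simp) (by simp; linarith)
    have := this.2.1
    norm_num at this
  have hdiff : (l₂ - l₄) ^ 2 - (l₁ - l₃) ^ 2 = 4 * ((l₂ - l₃) * (l₂ - l₁)) := by
    rw [← hdeg]; ring
  have hne := mul_ne_zero n1 n2
  rcases lt_or_gt_of_ne hne with h | h
  · obtain ⟨e⟩ := chainY_homeo (a := l₃) (b := l₄) (c := l₂) (d := l₁) h3 h4 h2 h1
      (by linarith) (by nlinarith)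
    exact ⟨(configHomeo l₁ l₂ l₃ l₄).trans ((homeoB l₁ l₂ l₃ l₄).trans e)⟩
  · obtain ⟨e⟩ := chainY_homeo (a := l₂) (b := l₁) (c := l₃) (d := l₄) h2 h1 h3 h4
      (by linarith) (by nlinarith)
    exact ⟨(configHomeo l₁ l₂ l₃ l₄).trans ((homeoA l₁ l₂ l₃ l₄).trans e)⟩
end

section
/- Let ℓ, m, c, a be real numbers with ℓ > 0, m > 0, a > 0, c ≠ 0, and let ρ, s, t : ℝ → ℝ be functions differentiable at φ₀ which satisfy, for all φ in a neighborhood of φ₀: (i) (ℓ + s(φ))·cos φ = c − (m + t(φ))·cos(ρ(φ)); (ii) (ℓ + s(φ))·sin φ = (m + t(φ))·sin(ρ(φ)); (iii) (c − m·cos(ρ(φ)) − ℓ·cos φ)² + (m·sin(ρ(φ)) − ℓ·sin φ)² = a². Assume s(φ₀) ≠ 0, ℓ + s(φ₀) ≠ 0, m + t(φ₀) ≠ 0, and sin(ρ(φ₀)) ≠ 0. Then the derivative at φ₀ of φ ↦ cos(ρ(φ)) equals (ℓ·t(φ₀) / (m·s(φ₀))) · sin(ρ(φ₀)); equivalently,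 ρ'(φ₀) = −ℓ·t(φ₀) / (m·s(φ₀)). -/
open Real Filter

theorem stmt_15 (l m c a φ₀ : ℝ)
    (hl : 0 < l) (hm : 0 < m) (ha : 0 < a) (hc : c ≠ 0)
    (ρ s t : ℝ → ℝ)
    (hρ : DifferentiableAt ℝ ρ φ₀) (hs : DifferentiableAt ℝ s φ₀)
    (ht : DifferentiableAt ℝ t φ₀)
    (h1 : ∀ᶠ φ in nhds φ₀, (l + s φ) * Real.cos φ = c - (m + t φ) * Real.cos (ρ φ))
    (h2 : ∀ᶠ φ in nhds φ₀, (l + s φ) * Real.sin φ = (m + t φ) * Real.sin (ρ φ))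
    (h3 : ∀ᶠ φ in nhds φ₀,
      (c - m * Real.cos (ρ φ) - l * Real.cos φ) ^ 2 +
        (m * Real.sin (ρ φ) - l * Real.sin φ) ^ 2 = a ^ 2)
    (hs0 : s φ₀ ≠ 0) (hls : l + s φ₀ ≠ 0) (hmt : m + t φ₀ ≠ 0)
    (hsin : Real.sin (ρ φ₀) ≠ 0) :
    deriv (fun φ => Real.cos (ρ φ)) φ₀ = (l * t φ₀ / (m * s φ₀)) * Real.sin (ρ φ₀) ∧
    deriv ρ φ₀ = -(l * t φ₀) / (m * s φ₀) := by
  have e1 := h1.self_of_nhds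
  have e2 := h2.self_of_nhds
  have hr := hρ.hasDerivAt
  have hC := hr.cos
  have hS := hr.sin
  have hcp := Real.hasDerivAt_cos φ₀
  have hsp := Real.hasDerivAt_sin φ₀
  have hX := (((hC.const_mul m).const_sub c).sub (hcp.const_mul l)).pow 2
  have hY := ((hS.const_mul m).sub (hsp.const_mul l)).pow 2
  have hF := hX.add hY
  have hG := (hasDerivAt_const φ₀ (a ^ 2)).congr_of_eventuallyEq h3
  have e3 := hF.unique hG
  have hne : Real.sin φ₀ * Real.cos (ρ φ₀) + Real.cos φ₀ * Real.sin (ρ φ₀) ≠ 0 := by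
    intro h
    have h4 : c * Real.sin φ₀ = 0 := by
      linear_combination (m + t φ₀) * h - Real.sin φ₀ * e1 + Real.cos φ₀ * e2
    have h5 : Real.sin φ₀ = 0 := (mul_eq_zero.mp h4).resolve_left hc
    rw [h5, mul_zero] at e2
    exact (mul_ne_zero hmt hsin) e2.symm
  have key : m * s φ₀ * deriv ρ φ₀ + l * t φ₀ = 0 := by
    apply (mul_eq_zero.mp _).resolve_left hne
    have hXv : c - m * Real.cos (ρ φ₀) - l * Real.cos φ₀
        = s φ₀ * Real.cos φ₀ + t φ₀ * Real.cos (ρ φ₀) := by linear_combination -e1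
    have hYv : m * Real.sin (ρ φ₀) - l * Real.sin φ₀
        = s φ₀ * Real.sin φ₀ - t φ₀ * Real.sin (ρ φ₀) := by linear_combination -e2
    simp only [Pi.sub_apply, hXv, hYv] at e3
    norm_num at e3
    have p1 := Real.sin_sq_add_cos_sq φ₀
    have p2 := Real.sin_sq_add_cos_sq (ρ φ₀)
    linear_combination e3 / 2
  have hd : deriv ρ φ₀ = -(l * t φ₀) / (m * s φ₀) := by
    rw [eq_div_iff (mul_ne_zero hm.ne' hs0)]
    linear_combination key
  refine ⟨?_, hd⟩
  rw [hC.deriv, hd]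
  ring
end

section
/- Let ℓ, m, c, a, γ be real numbers with ℓ > 0, m > 0, a > 0, c ≠ 0, and let ρ, s, t : ℝ → ℝ satisfy the hypotheses: ρ, s, t differentiable at φ₀; (i) (ℓ + s(φ))·cos φ = c − (m + t(φ))·cos(ρ(φ)); (ii) (ℓ + s(φ))·sin φ = (m + t(φ))·sin(ρ(φ)); (iii) (c − m·cos(ρ(φ)) − ℓ·cos φ)² + (m·sin(ρ(φ)) − ℓ·sin φ)² = a², for all φ near φ₀; with s(φ₀) ≠ 0, ℓ + s(φ₀) ≠ 0, m + t(φ₀) ≠ 0, sin(ρ(φ₀)) ≠ 0, and additionally sin(φ₀ + ρ(φ₀)) ≠ 0. Let ψ : ℝ → ℝ be differentiable at φ₀ and satisfy, for all φ near φ₀: a·cos(ψ(φ) − γ) = c − m·cos(ρ(φ)) − ℓ·cos φ and a·sin(ψ(φ) − γ) = m·sin(ρ(φ)) − ℓ·sin φ. Then ψ'(φ₀) = −ℓ / s(φ₀); equivalently, the derivative at φ₀ of φ ↦ cos(ψ(φ)) equals (ℓ / s(φ₀)) · sin(ψ(φ₀)). -/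
open Real Filter

theorem stmt_16 (l m c a γ φ₀ : ℝ)
    (hl : 0 < l) (hm : 0 < m) (ha : 0 < a) (hc : c ≠ 0)
    (ρ s t : ℝ → ℝ)
    (hρ : DifferentiableAt ℝ ρ φ₀) (hs : DifferentiableAt ℝ s φ₀)
    (ht : DifferentiableAt ℝ t φ₀)
    (h1 : ∀ᶠ φ in nhds φ₀, (l + s φ) * Real.cos φ = c - (m + t φ) * Real.cos (ρ φ))
    (h2 : ∀ᶠ φ in nhds φ₀, (l + s φ) * Real.sin φ = (m + t φ) * Real.sin (ρ φ))
    (h3 : ∀ᶠ φ in nhds φ₀,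
      (c - m * Real.cos (ρ φ) - l * Real.cos φ) ^ 2 +
        (m * Real.sin (ρ φ) - l * Real.sin φ) ^ 2 = a ^ 2)
    (hs0 : s φ₀ ≠ 0) (hls : l + s φ₀ ≠ 0) (hmt : m + t φ₀ ≠ 0)
    (hsin : Real.sin (ρ φ₀) ≠ 0)
    (hsin' : Real.sin (φ₀ + ρ φ₀) ≠ 0)
    (ψ : ℝ → ℝ) (hψ : DifferentiableAt ℝ ψ φ₀)
    (h4 : ∀ᶠ φ in nhds φ₀,
      a * Real.cos (ψ φ - γ) = c - m * Real.cos (ρ φ) - l * Real.cos φ)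
    (h5 : ∀ᶠ φ in nhds φ₀,
      a * Real.sin (ψ φ - γ) = m * Real.sin (ρ φ) - l * Real.sin φ) :
    deriv ψ φ₀ = -l / s φ₀ ∧
    deriv (fun φ => Real.cos (ψ φ)) φ₀ = (l / s φ₀) * Real.sin (ψ φ₀) := by
  have dψ := hψ.hasDerivAt
  have dρ := hρ.hasDerivAt
  have e1 := h1.self_of_nhds
  have e2 := h2.self_of_nhds
  have e4 := h4.self_of_nhds
  have e5 := h5.self_of_nhds
  have L4 := ((dψ.sub_const γ).cos.const_mul a)
  have R4 := ((dρ.cos.const_mul m).const_sub c).sub ((Real.hasDerivAt_cos φ₀).const_mul l)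
  have L5 := ((dψ.sub_const γ).sin.const_mul a)
  have R5 := (dρ.sin.const_mul m).sub ((Real.hasDerivAt_sin φ₀).const_mul l)
  have D4 := L4.unique (R4.congr_of_eventuallyEq h4)
  have D5 := L5.unique (R5.congr_of_eventuallyEq h5)
  have key : deriv ψ φ₀ = -l / s φ₀ := by
    rw [eq_div_iff hs0]
    apply mul_right_cancel₀ hsin'
    rw [Real.sin_add]
    generalize deriv ψ φ₀ = p at *
    generalize deriv ρ φ₀ = r at *
    have f4 : a * Real.cos (ψ φ₀ - γ) = s φ₀ * Real.cos φ₀ + t φ₀ * Real.cos (ρ φ₀) := by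
      linarith
    have f5 : a * Real.sin (ψ φ₀ - γ) = s φ₀ * Real.sin φ₀ - t φ₀ * Real.sin (ρ φ₀) := by
      linarith
    linear_combination (-Real.cos (ρ φ₀)) * D4 + Real.sin (ρ φ₀) * D5
      - p * Real.cos (ρ φ₀) * f5 - p * Real.sin (ρ φ₀) * f4
  refine ⟨key, ?_⟩
  rw [dψ.cos.deriv, key]
  ring
end

section
/- Under the hypotheses of the two implicit-differentiation identities (ρ, s, t, ψ differentiable at φ₀ satisfying equations (i)–(iii) and the two ψ-equations near φ₀, with ℓ, m, a, b > 0, c ≠ 0, s(φ₀) ≠ 0, ℓ + s(φ₀) ≠ 0, m + t(φ₀) ≠ 0, sin(ρ(φ₀)) ≠ 0, sin(φ₀ + ρ(φ₀)) ≠ 0), fix a point x̄ = (x₀, y₀) ∈ ℝ² and define y(φ) = (ℓ·cos φ + b·cos(ψ(φ)), ℓ·sin φ + b·sin(ψ(φ))) and F(φ) = ‖y(φ) − x̄‖². Then F'(φ₀) = 0 if and only if the three points z := (ℓ + s(φ₀))·(cos φ₀, sin φ₀), y(φ₀), and x̄ are collinear, i.e. the determinant of the 2×2 matrix with columns z − y(φ₀)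 and y(φ₀) − x̄ vanishes. -/
open Real Filter

theorem stmt_17 (l m c a b γ φ₀ x₀ y₀ : ℝ)
    (hl : 0 < l) (hm : 0 < m) (ha : 0 < a) (hb : 0 < b) (hc : c ≠ 0)
    (ρ s t : ℝ → ℝ)
    (hρ : DifferentiableAt ℝ ρ φ₀) (hs : DifferentiableAt ℝ s φ₀)
    (ht : DifferentiableAt ℝ t φ₀)
    (h1 : ∀ᶠ φ in nhds φ₀, (l + s φ) * Real.cos φ = c - (m + t φ) * Real.cos (ρ φ))
    (h2 : ∀ᶠ φ in nhds φ₀, (l + s φ) * Real.sin φ = (m + t φ) * Real.sin (ρ φ))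
    (h3 : ∀ᶠ φ in nhds φ₀,
      (c - m * Real.cos (ρ φ) - l * Real.cos φ) ^ 2 +
        (m * Real.sin (ρ φ) - l * Real.sin φ) ^ 2 = a ^ 2)
    (hs0 : s φ₀ ≠ 0) (hls : l + s φ₀ ≠ 0) (hmt : m + t φ₀ ≠ 0)
    (hsin : Real.sin (ρ φ₀) ≠ 0)
    (hsin' : Real.sin (φ₀ + ρ φ₀) ≠ 0)
    (ψ : ℝ → ℝ) (hψ : DifferentiableAt ℝ ψ φ₀)
    (h4 : ∀ᶠ φ in nhds φ₀,
      a * Real.cos (ψ φ - γ) = c - m * Real.cos (ρ φ) - l * Real.cos φ)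
    (h5 : ∀ᶠ φ in nhds φ₀,
      a * Real.sin (ψ φ - γ) = m * Real.sin (ρ φ) - l * Real.sin φ) :
    deriv (fun φ =>
        (l * Real.cos φ + b * Real.cos (ψ φ) - x₀) ^ 2 +
        (l * Real.sin φ + b * Real.sin (ψ φ) - y₀) ^ 2) φ₀ = 0 ↔
      Matrix.det
        !![(l + s φ₀) * Real.cos φ₀ - (l * Real.cos φ₀ + b * Real.cos (ψ φ₀)),
             (l * Real.cos φ₀ + b * Real.cos (ψ φ₀)) - x₀;
           (l + s φ₀) * Real.sin φ₀ - (l * Real.sin φ₀ + b * Real.sin (ψ φ₀)),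
             (l * Real.sin φ₀ + b * Real.sin (ψ φ₀)) - y₀] = 0 := by
  have e1 := h1.self_of_nhds
  have e2 := h2.self_of_nhds
  have e4 := h4.self_of_nhds
  have e5 := h5.self_of_nhds
  have dρ := hρ.hasDerivAt
  have dψ := hψ.hasDerivAt
  generalize deriv ρ φ₀ = r at dρ
  generalize deriv ψ φ₀ = p at dψ
  have dc := Real.hasDerivAt_cos φ₀
  have ds := Real.hasDerivAt_sin φ₀
  have k4 := ((dψ.sub_const γ).cos.const_mul a).unique
    ((((dρ.cos.const_mul m).const_sub c).sub (dc.const_mul l)).congr_of_eventuallyEq h4)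
  have k5 := ((dψ.sub_const γ).sin.const_mul a).unique
    (((dρ.sin.const_mul m).sub (ds.const_mul l)).congr_of_eventuallyEq h5)
  have hp : p * s φ₀ = -l := by
    apply mul_right_cancel₀ hsin'
    rw [Real.sin_add]
    linear_combination Real.cos (ρ φ₀) * (-k4) + Real.sin (ρ φ₀) * k5
      - p * Real.cos (ρ φ₀) * (e5 - e2) - p * Real.sin (ρ φ₀) * (e4 - e1)
  have dF := ((((dc.const_mul l).add (dψ.cos.const_mul b)).sub_const x₀).pow 2).add
    ((((ds.const_mul l).add (dψ.sin.const_mul b)).sub_const y₀).pow 2)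
  have hd := dF.deriv
  rw [Matrix.det_fin_two_of]
  erw [hd]
  have hl' : l ≠ 0 := hl.ne'
  simp only [Pi.add_apply, Nat.cast_ofNat, Nat.add_one_sub_one, pow_one]
  constructor
  · intro h
    apply mul_left_cancel₀ (mul_ne_zero two_ne_zero hl')
    linear_combination s φ₀ * h - 2 * b * (-(l * Real.cos φ₀ + b * Real.cos (ψ φ₀) - x₀) * Real.sin (ψ φ₀)
      + (l * Real.sin φ₀ + b * Real.sin (ψ φ₀) - y₀) * Real.cos (ψ φ₀)) * hp
  · intro h
    apply mul_left_cancel₀ hs0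
    linear_combination 2 * l * h + 2 * b * (-(l * Real.cos φ₀ + b * Real.cos (ψ φ₀) - x₀) * Real.sin (ψ φ₀)
      + (l * Real.sin φ₀ + b * Real.sin (ψ φ₀) - y₀) * Real.cos (ψ φ₀)) * hp
end
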